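/- Every twincut graph G_k belongs to the class C, where C is the smallest class of graphs containing all graphs on at most two vertices and closed under vertex replication and gluing along independent sets of size at most two. Consequently, C is a hereditary class of triangle-free graphs of unbounded chromatic number. -/

import Mathlib

/-- A structured tree: a rooted tree together with, at each internal node,
a graph on its children. A `leaf` is a tree with a single (leaf) node; a
`node ι c g` has children indexed by `ι`, subtrees `c i`, and the graph `g`
on the children. -/
inductive STree : Type 1 where
  | leaf : STree
  | node : (ι : Type) → (ι → STree) → SimpleGraph ι → STree

namespace STree

/-- The type of nodes of a structured tree. -/
def NodeType : STree → Type
  | leaf => PUnit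
  | node ι c _ => PUnit ⊕ Σ i : ι, NodeType (c i)

/-- The type of branches (root-to-leaf paths) of a structured tree. -/
def Branch : STree → Type
  | leaf => PUnit
  | node _ c _ => Σ i, Branch (c i)

/-- The root of a structured tree, as a node. -/
def root : (t : STree) → t.NodeType
  | leaf => PUnit.unit
  | node _ _ _ => Sum.inl PUnit.unit

/-- `onBranch t b u` means that the node `u` lies on the branch `b`. -/
def onBranch : (t : STree) → t.Branch → t.NodeType → Prop
  | leaf, _, _ => True
  | node _ c _, ⟨i, b⟩, u =>
      match u with
      | Sum.inl _ => True
      | Sum.inr ⟨j, w⟩ => ∃ h : j = i, onBranch (c i) b (h ▸ w)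

/-- Adjacency between tree nodes in the realization: the union of the edges
of the graphs `g(v)` placed on the children of each internal node `v`
(tree edges are *not* included). -/
def treeAdj : (t : STree) → t.NodeType → t.NodeType → Prop
  | leaf, _, _ => False
  | node ι c g, u, v =>
      match u, v with
      | Sum.inr ⟨i, u'⟩, Sum.inr ⟨j, v'⟩ =>
          (∃ h : i = j, treeAdj (c j) (h ▸ u') v') ∨
          (g.Adj i j ∧ u' = root (c i) ∧ v' = root (c j))
      | _, _ => False

/-- The realization `R(T,g)` of a structured tree: its vertices are the tree
nodes together with the branches; edges are those of the graphs `g(v)`, plus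
an edge from each branch vertex to every tree node lying on that branch. -/
def realization (t : STree) : SimpleGraph (t.NodeType ⊕ t.Branch) :=
  SimpleGraph.fromRel (fun x y =>
    match x, y with
    | Sum.inl u, Sum.inl v => treeAdj t u v
    | Sum.inl u, Sum.inr b => onBranch t b u
    | Sum.inr b, Sum.inl u => onBranch t b u
    | Sum.inr _, Sum.inr _ => False)

/-- The level of a node (the root is at level 1). -/
def level : (t : STree) → t.NodeType → ℕ
  | leaf, _ => 1
  | node _ c _, u =>
      match u with
      | Sum.inl _ => 1
      | Sum.inr ⟨i, w⟩ => level (c i) w + 1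

/-- `IsInternalGraphOf t ⟨ι, g⟩` means that `g` is the graph attached to some
internal node of `t` (on its children, indexed by `ι`). -/
inductive IsInternalGraphOf : STree → (Σ ι : Type, SimpleGraph ι) → Prop where
  | here : ∀ (ι : Type) (c : ι → STree) (g : SimpleGraph ι),
      IsInternalGraphOf (node ι c g) ⟨ι, g⟩
  | child : ∀ (ι : Type) (c : ι → STree) (g : SimpleGraph ι) (i : ι) (p),
      IsInternalGraphOf (c i) p → IsInternalGraphOf (node ι c g) p

end STree

/-- Builds the structured tree in which all nodes at level `i` carry the
`i`-th graph of the list on their children (so the tree has `L.length + 1`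
levels). -/
def buildTree : List (Σ V : Type, SimpleGraph V) → STree
  | [] => .leaf
  | ⟨ι, g⟩ :: rest => .node ι (fun _ => buildTree rest) g

/-- The realization of a structured tree, packaged with its vertex type. -/
def realizationSigma (t : STree) : Σ V : Type, SimpleGraph V :=
  ⟨t.NodeType ⊕ t.Branch, t.realization⟩

/-- `twincutList m` is the list `[G₂, G₃, …, G_{m+1}]` of twincut graphs. -/
def twincutList : ℕ → List (Σ V : Type, SimpleGraph V)
  | 0 => []
  | m + 1 => twincutList m ++ [realizationSigma (buildTree (twincutList m))]

/-- The structured tree `T_{m+2}` whose realization is the twincut graph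
`G_{m+2}`: it has `m + 1` levels, and every node at level `i ≤ m` carries
the graph `G_{i+1}` on its children. -/
def twincutTree (m : ℕ) : STree := buildTree (twincutList m)

/-- The twincut graphs: `G 1` is the one-vertex graph, and for `k ≥ 2`,
`G k` is the realization of the structured tree `T_k`. -/
def twincutG : ℕ → Σ V : Type, SimpleGraph V
  | 0 => ⟨PUnit, ⊥⟩
  | 1 => ⟨PUnit, ⊥⟩
  | (m + 2) => realizationSigma (twincutTree m)

/-- Vertex replication: add a new vertex (a non-adjacent twin of `v`) with the
same neighborhood as `v`, non-adjacent to `v`. Equivalently, substitute `v`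
by an independent set of size two. -/
def replicateGraph {V : Type} (G : SimpleGraph V) (v : V) : SimpleGraph (V ⊕ Unit) :=
  SimpleGraph.fromRel (fun x y =>
    match x, y with
    | Sum.inl a, Sum.inl b => G.Adj a b
    | Sum.inl a, Sum.inr _ => G.Adj a v
    | Sum.inr _, Sum.inl b => G.Adj v b
    | Sum.inr _, Sum.inr _ => False)

/-- Gluing the graphs `G` and `H` along the set `S`, embedded in `G` via `f`
and in `H` via `h`: the two copies of `S` are identified. -/
def glueGraphs {V W S : Type} (G : SimpleGraph V) (H : SimpleGraph W)
    (f : S → V) (h : S → W) : SimpleGraph (V ⊕ {w : W // w ∉ Set.range h}) :=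
  SimpleGraph.fromRel (fun x y =>
    match x, y with
    | Sum.inl a, Sum.inl b => G.Adj a b
    | Sum.inl a, Sum.inr w => ∃ s, f s = a ∧ H.Adj (h s) w.val
    | Sum.inr w, Sum.inl a => ∃ s, f s = a ∧ H.Adj (h s) w.val
    | Sum.inr w, Sum.inr w' => H.Adj w.val w'.val)

/-- The class `𝒞`: the smallest class of graphs (closed under isomorphism)
containing all graphs on at most two vertices, closed under vertex
replication (adding a non-adjacent twin) and under gluing two of its members
along an independent set of size at most two. -/
inductive InC : ∀ V : Type, SimpleGraph V → Prop where
  | small (V : Type) (G : SimpleGraph V) : Finite V → Nat.card V ≤ 2 → InC V G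
  | iso (V W : Type) (G : SimpleGraph V) (H : SimpleGraph W) :
      InC V G → Nonempty (G ≃g H) → InC W H
  | replicate (V : Type) (G : SimpleGraph V) (v : V) :
      InC V G → InC (V ⊕ Unit) (replicateGraph G v)
  | glue (V W S : Type) (G : SimpleGraph V) (H : SimpleGraph W) (f : S → V) (h : S → W) :
      InC V G → InC W H → Function.Injective f → Function.Injective h →
      Finite S → Nat.card S ≤ 2 →
      (∀ s s' : S, ¬ G.Adj (f s) (f s')) → (∀ s s' : S, ¬ H.Adj (h s) (h s')) →
      InC (V ⊕ {w : W // w ∉ Set.range h}) (glueGraphs G H f h)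

/-- `G` has a pair of non-adjacent twins: two distinct non-adjacent vertices
with the same neighborhood. -/
def HasNonadjTwins {V : Type} (G : SimpleGraph V) : Prop :=
  ∃ u v : V, u ≠ v ∧ ¬ G.Adj u v ∧ ∀ w, G.Adj u w ↔ G.Adj v w

/-- `G` has a vertex cutset which is an independent set of size at most two:
a set `S` of at most two pairwise non-adjacent vertices whose removal leaves
a disconnected graph. -/
def HasSmallIndepCutset {V : Type} (G : SimpleGraph V) : Prop :=
  ∃ S : Set V, S.ncard ≤ 2 ∧ (∀ a ∈ S, ∀ b ∈ S, ¬ G.Adj a b) ∧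
    ¬ (G.induce Sᶜ).Connected



section Helpers

open SimpleGraph

theorem inC_finite {V : Type} {G : SimpleGraph V} (hG : InC V G) : Finite V := by
  induction hG with
  | small V G h _ => exact h
  | iso V W G H _ e ih => exact Finite.of_equiv _ e.some.toEquiv
  | replicate V G v _ ih => infer_instance
  | glue V W S G H f h _ _ _ _ _ _ _ _ ih1 ih2 => infer_instance

theorem glue_sets {X : Type} (K : SimpleGraph X) (A B : Set X)
    (hA : InC A (K.induce A)) (hB : InC B (K.induce B))
    (hcard : Nat.card (A ∩ B : Set X) ≤ 2)
    (hind : ∀ a ∈ A ∩ B, ∀ b ∈ A ∩ B, ¬ K.Adj a b)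
    (hno : ∀ a ∈ A, ∀ b ∈ B, a ∉ B → b ∉ A → ¬ K.Adj a b) :
    InC (A ∪ B : Set X) (K.induce (A ∪ B)) := by
  have hfA := inC_finite hA
  have hfin : Finite (A ∩ B : Set X) := Set.Finite.subset (s := A) hfA Set.inter_subset_left
  let f : (A ∩ B : Set X) → A := fun s => ⟨s.1, s.2.1⟩
  let h : (A ∩ B : Set X) → B := fun s => ⟨s.1, s.2.2⟩
  have hh : ∀ w : B, w ∉ Set.range h ↔ w.1 ∉ A := by
    intro w
    constructor
    · intro hw hwA
      exact hw ⟨⟨w.1, hwA, w.2⟩, rfl⟩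
    · rintro hw ⟨s, rfl⟩
      exact hw s.2.1
  refine InC.iso _ _ _ _ (InC.glue _ _ _ _ _ f h hA hB ?_ ?_ hfin hcard ?_ ?_) ⟨?_⟩
  · intro s t hst
    exact Subtype.ext (congrArg (fun z : A => z.1) hst)
  · intro s t hst
    exact Subtype.ext (congrArg (fun z : B => z.1) hst)
  · intro s t
    exact hind _ s.2 _ t.2
  · intro s t
    exact hind _ s.2 _ t.2
  · let φ : (A ⊕ {w : B // w ∉ Set.range h}) → (A ∪ B : Set X) := fun x =>
      match x with
      | Sum.inl a => ⟨a.1, Or.inl a.2⟩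
      | Sum.inr w => ⟨w.1.1, Or.inr w.1.2⟩
    have hφ : Function.Bijective φ := by
      constructor
      · rintro (a | w) (b | w') hab
        · have := congrArg Subtype.val hab
          exact congrArg Sum.inl (Subtype.ext this)
        · have : a.1 = w'.1.1 := congrArg Subtype.val hab
          exact absurd (this ▸ a.2) ((hh _).1 w'.2)
        · have : w.1.1 = b.1 := congrArg Subtype.val hab
          exact absurd (this ▸ b.2) ((hh _).1 w.2)
        · have : w.1.1 = w'.1.1 := congrArg (fun z : (A ∪ B : Set X) => z.1) hab
          exact congrArg Sum.inr (Subtype.ext (Subtype.ext this))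
      · rintro ⟨x, hx⟩
        by_cases hxA : x ∈ A
        · exact ⟨Sum.inl ⟨x, hxA⟩, rfl⟩
        · have hxB : x ∈ B := hx.resolve_left hxA
          exact ⟨Sum.inr ⟨⟨x, hxB⟩, (hh _).2 hxA⟩, rfl⟩
    refine ⟨Equiv.ofBijective φ hφ, ?_⟩
    have key : ∀ (a : A) (w : B), w.1 ∉ A →
        ((∃ s, f s = a ∧ (K.induce B).Adj (h s) w) ↔ K.Adj a.1 w.1) := by
      intro a w hw
      constructor
      · rintro ⟨s, rfl, hs⟩
        exact hs
      · intro hadj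
        by_cases haB : a.1 ∈ B
        · exact ⟨⟨a.1, a.2, haB⟩, rfl, hadj⟩
        · exact absurd hadj (hno _ a.2 _ w.2 haB hw)
    rintro (a | w) (b | w')
    · simp only [Equiv.ofBijective_apply, comap_adj, glueGraphs, fromRel_adj, φ,
        Function.Embedding.subtype_apply, ne_eq]
      constructor
      · intro hab
        exact ⟨fun e => hab.ne (congrArg Subtype.val (Sum.inl.inj e)), Or.inl hab⟩
      · rintro ⟨_, h1 | h1⟩
        · exact h1
        · exact h1.symm
    · simp only [Equiv.ofBijective_apply, comap_adj, glueGraphs, fromRel_adj, φ,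
        Function.Embedding.subtype_apply, ne_eq]
      have := key a w'.1 ((hh _).1 w'.2)
      simp only [comap_adj, Function.Embedding.subtype_apply] at this
      rw [this]
      simp
    · simp only [Equiv.ofBijective_apply, comap_adj, glueGraphs, fromRel_adj, φ,
        Function.Embedding.subtype_apply, ne_eq]
      have := key b w.1 ((hh _).1 w.2)
      simp only [comap_adj, Function.Embedding.subtype_apply] at this
      rw [this]
      simp [K.adj_comm]
    · simp only [Equiv.ofBijective_apply, comap_adj, glueGraphs, fromRel_adj, φ,
        Function.Embedding.subtype_apply, ne_eq]
      constructor
      · intro hab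
        exact ⟨fun e => hab.ne (congrArg (fun z => z.1.1) (Sum.inr.inj e)), Or.inl hab⟩
      · rintro ⟨_, h1 | h1⟩
        · exact h1
        · exact h1.symm

theorem twin_sets {X : Type} (K : SimpleGraph X) (A : Set X) (u v : X)
    (hA : InC A (K.induce A)) (hu : u ∉ A) (hv : v ∈ A)
    (htw : ∀ w ∈ A, K.Adj u w ↔ K.Adj v w) :
    InC (insert u A : Set X) (K.induce (insert u A)) := by
  refine InC.iso _ _ _ _ (InC.replicate _ _ ⟨v, hv⟩ hA) ⟨?_⟩
  let φ : (A ⊕ Unit) → (insert u A : Set X) := fun x =>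
      match x with
      | Sum.inl a => ⟨a.1, Or.inr a.2⟩
      | Sum.inr _ => ⟨u, Or.inl rfl⟩
  have hφ : Function.Bijective φ := by
    constructor
    · rintro (a | w) (b | w') hab
      · have := congrArg Subtype.val hab
        exact congrArg Sum.inl (Subtype.ext this)
      · have : a.1 = u := congrArg Subtype.val hab
        exact absurd (this ▸ a.2) hu
      · have : u = b.1 := congrArg Subtype.val hab
        exact absurd (this ▸ b.2) hu
      · rfl
    · rintro ⟨x, rfl | hx⟩
      · exact ⟨Sum.inr (), rfl⟩
      · exact ⟨Sum.inl ⟨x, hx⟩, rfl⟩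
  refine ⟨Equiv.ofBijective φ hφ, ?_⟩
  rintro (a | w) (b | w')
  · simp only [Equiv.ofBijective_apply, comap_adj, replicateGraph, fromRel_adj, φ,
        Function.Embedding.subtype_apply, ne_eq]
    constructor
    · intro hab
      exact ⟨fun e => hab.ne (congrArg Subtype.val (Sum.inl.inj e)), Or.inl hab⟩
    · rintro ⟨_, h1 | h1⟩
      · exact h1
      · exact h1.symm
  · simp [φ, replicateGraph, K.adj_comm a.1, htw _ a.2]
  · simp [φ, replicateGraph, K.adj_comm b.1, htw _ b.2]
  · simp [φ, replicateGraph]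

theorem inC_of_univ {X : Type} (K : SimpleGraph X) (A : Set X) (h : A = Set.univ)
    (hA : InC A (K.induce A)) : InC X K := by
  subst h
  exact InC.iso _ _ _ _ hA ⟨induceUnivIso K⟩

theorem inC_hereditary {V : Type} {G : SimpleGraph V} (hG : InC V G) :
    ∀ (W : Type) (H : SimpleGraph W), (H ↪g G) → InC W H := by
  induction hG with
  | small V G h h2 =>
    intro W H e
    exact InC.small _ _ (Finite.of_injective e e.injective)
      ((Nat.card_le_card_of_injective e e.injective).trans h2)
  | iso V V' G G' _ e ih =>
    intro W H e'
    exact ih W H (e.some.symm.toEmbedding.comp e')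
  | replicate V G v _ ih =>
    intro W H e
    let p : V ⊕ Unit → V := fun x => match x with
      | Sum.inl a => a
      | Sum.inr _ => v
    have hp : ∀ x y, G.Adj (p x) (p y) ↔ (replicateGraph G v).Adj x y := by
      rintro (a | a) (b | b)
      · simp only [p, replicateGraph, fromRel_adj, ne_eq]
        constructor
        · intro hab
          exact ⟨fun e => hab.ne (Sum.inl.inj e), Or.inl hab⟩
        · rintro ⟨_, h1 | h1⟩
          · exact h1
          · exact h1.symm
      · simp [p, replicateGraph, G.adj_comm v]
      · simp [p, replicateGraph, G.adj_comm v]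
      · simp [p, replicateGraph]
    by_cases hboth : (∃ a, e a = Sum.inl v) ∧ (∃ b, e b = Sum.inr ())
    · obtain ⟨⟨a, ha⟩, b, hb⟩ := hboth
      have hab : a ≠ b := by
        rintro rfl
        rw [ha] at hb
        cases hb
      have h1 : InC ({b}ᶜ : Set W) (H.induce {b}ᶜ) := by
        refine ih _ _ ⟨⟨fun w => p (e w.1), ?_⟩, ?_⟩
        · rintro ⟨x, hx⟩ ⟨y, hy⟩ hxy
          refine Subtype.ext (e.injective ?_)
          have hx' : e x ≠ Sum.inr () := fun h => hx (e.injective (h.trans hb.symm))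
          have hy' : e y ≠ Sum.inr () := fun h => hy (e.injective (h.trans hb.symm))
          dsimp only at hxy ⊢
          rcases hex : e x with c | c
          · rcases hey : e y with d | d
            · rw [hex, hey] at hxy
              exact congrArg Sum.inl hxy
            · exact absurd hey hy'
          · exact absurd hex hx'
        · intro x y
          exact (hp _ _).trans e.map_adj_iff
      refine inC_of_univ H (insert b {b}ᶜ) ?_ (twin_sets H _ b a h1 (by simp) hab ?_)
      · ext x
        simp [em]
      · intro w _
        rw [← e.map_adj_iff, ← e.map_adj_iff, ← hp, ← hp, ha, hb]
    · refine ih _ _ ⟨⟨fun w => p (e w), ?_⟩, ?_⟩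
      · intro x y hxy
        refine e.injective ?_
        dsimp only at hxy
        rcases hex : e x with c | c <;> rcases hey : e y with d | d <;> rw [hex, hey] at hxy
        · exact congrArg Sum.inl hxy
        · exact absurd ⟨⟨x, hex.trans (congrArg Sum.inl hxy)⟩, y, hey⟩ hboth
        · exact absurd ⟨⟨y, hey.trans (congrArg Sum.inl hxy.symm)⟩, x, hex⟩ hboth
      · intro x y
        exact (hp _ _).trans e.map_adj_iff
  | glue V V' S G G' f h hG hG' hf hh hS hS2 hfi hhi ih1 ih2 =>
    intro W H e
    have hll : ∀ a b, (glueGraphs G G' f h).Adj (Sum.inl a) (Sum.inl b) ↔ G.Adj a b := by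
      intro a b
      simp only [glueGraphs, fromRel_adj, ne_eq]
      constructor
      · rintro ⟨_, h1 | h1⟩
        · exact h1
        · exact h1.symm
      · intro hab
        exact ⟨fun e => hab.ne (Sum.inl.inj e), Or.inl hab⟩
    have hrr : ∀ a b, (glueGraphs G G' f h).Adj (Sum.inr a) (Sum.inr b) ↔ G'.Adj a.1 b.1 := by
      intro a b
      simp only [glueGraphs, fromRel_adj, ne_eq]
      constructor
      · rintro ⟨_, h1 | h1⟩
        · exact h1
        · exact h1.symm
      · intro hab
        exact ⟨fun e => hab.ne (congrArg Subtype.val (Sum.inr.inj e)), Or.inl hab⟩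
    have hlr : ∀ a w, (glueGraphs G G' f h).Adj (Sum.inl a) (Sum.inr w) ↔
        ∃ s, f s = a ∧ G'.Adj (h s) w.1 := by
      intro a w
      simp [glueGraphs]
    let A : Set W := {x | ∃ a, e x = Sum.inl a}
    let B : Set W := {x | (∃ w, e x = Sum.inr w) ∨ ∃ s, e x = Sum.inl (f s)}
    have hA : InC A (H.induce A) := by
      choose q hq using (fun x : A => x.2)
      refine ih1 _ _ ⟨⟨q, ?_⟩, ?_⟩
      · intro x y hxy
        exact Subtype.ext (e.injective ((hq x).trans ((congrArg Sum.inl hxy).trans (hq y).symm)))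
      · intro x y
        change G.Adj (q x) (q y) ↔ H.Adj x.1 y.1
        rw [← hll, ← hq, ← hq, e.map_adj_iff]
    have hB : InC B (H.induce B) := by
      have hB' : ∀ x : B, ∃ w' : V', (∃ w, e x.1 = Sum.inr w ∧ w' = w.1) ∨
          ∃ s, e x.1 = Sum.inl (f s) ∧ w' = h s := by
        rintro ⟨x, ⟨w, hw⟩ | ⟨s, hs⟩⟩
        · exact ⟨w.1, Or.inl ⟨w, hw, rfl⟩⟩
        · exact ⟨h s, Or.inr ⟨s, hs, rfl⟩⟩
      choose q hq using hB'
      refine ih2 _ _ ⟨⟨q, ?_⟩, ?_⟩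
      · intro x y hxy
        refine Subtype.ext (e.injective ?_)
        rcases hq x with ⟨w, hw, hw2⟩ | ⟨s, hs, hs2⟩ <;>
        rcases hq y with ⟨w', hw', hw2'⟩ | ⟨s', hs', hs2'⟩
        · rw [hw, hw']
          exact congrArg Sum.inr (Subtype.ext (hw2.symm.trans (hxy.trans hw2')))
        · exact absurd ⟨s', hs2'.symm.trans (hxy.symm.trans hw2)⟩ w.2
        · exact absurd ⟨s, hs2.symm.trans (hxy.trans hw2')⟩ w'.2
        · rw [hs, hs']
          rw [hh (hs2.symm.trans (hxy.trans hs2'))]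
      · intro x y
        change G'.Adj (q x) (q y) ↔ H.Adj x.1 y.1
        rw [← e.map_adj_iff]
        rcases hq x with ⟨w, hw, hw2⟩ | ⟨s, hs, hs2⟩ <;>
        rcases hq y with ⟨w', hw', hw2'⟩ | ⟨s', hs', hs2'⟩
        · rw [hw, hw', hrr, hw2, hw2']
        · rw [hw, hs', hw2, hs2', (glueGraphs G G' f h).adj_comm, hlr]
          constructor
          · intro h3
            exact ⟨s', rfl, h3.symm⟩
          · rintro ⟨s, h3, h4⟩
            rw [← hf h3]
            exact h4.symm
        · rw [hs, hw', hs2, hw2', hlr]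
          constructor
          · intro h3
            exact ⟨s, rfl, h3⟩
          · rintro ⟨s, h3, h4⟩
            rw [← hf h3]
            exact h4
        · rw [hs, hs', hll, hs2, hs2']
          exact iff_of_false (hhi _ _) (hfi _ _)
    have hABs : ∀ x ∈ A ∩ B, ∃ s, e x = Sum.inl (f s) := by
      rintro x ⟨⟨a, ha⟩, ⟨w, hw⟩ | hs⟩
      · rw [ha] at hw
        cases hw
      · exact hs
    refine inC_of_univ H (A ∪ B) ?_ (glue_sets H A B hA hB ?_ ?_ ?_)
    · ext x
      simp only [Set.mem_union, Set.mem_univ, iff_true]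
      rcases hx : e x with a | w
      · exact Or.inl ⟨a, hx⟩
      · exact Or.inr (Or.inl ⟨w, hx⟩)
    · choose q hq using (fun x : (A ∩ B : Set W) => hABs x.1 x.2)
      refine (Nat.card_le_card_of_injective q ?_).trans hS2
      intro x y hxy
      exact Subtype.ext (e.injective (by rw [hq, hq, hxy]))
    · intro a ha b hb
      obtain ⟨s, hs⟩ := hABs a ha
      obtain ⟨t, ht⟩ := hABs b hb
      rw [← e.map_adj_iff, hs, ht, hll]
      exact hfi _ _
    · rintro a ⟨a', ha'⟩ b (⟨w, hw⟩ | ⟨s, hs⟩) hnB hnA hadj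
      · rw [← e.map_adj_iff, ha', hw, hlr] at hadj
        obtain ⟨s, h1, _⟩ := hadj
        exact hnB (Or.inr ⟨s, by rw [ha', h1]⟩)
      · exact hnA ⟨_, hs⟩

theorem inC_triangleFree {V : Type} {G : SimpleGraph V} (hG : InC V G) :
    ∀ x y z, G.Adj x y → G.Adj y z → G.Adj x z → False := by
  induction hG with
  | small V G h h2 =>
    intro x y z hxy hyz hxz
    have hinj : Function.Injective ![x, y, z] := by
      intro i j hij
      have := hxy.ne
      have := hyz.ne
      have := hxz.ne
      fin_cases i <;> fin_cases j <;> simp_all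
    have := Nat.card_le_card_of_injective _ hinj
    simp at this
    omega
  | iso V V' G G' _ e ih =>
    intro x y z hxy hyz hxz
    have e' := e.some.symm
    exact ih _ _ _ (e'.map_adj_iff.2 hxy) (e'.map_adj_iff.2 hyz) (e'.map_adj_iff.2 hxz)
  | replicate V G v _ ih =>
    let p : V ⊕ Unit → V := fun x => match x with
      | Sum.inl a => a
      | Sum.inr _ => v
    have hp : ∀ x y, (replicateGraph G v).Adj x y → G.Adj (p x) (p y) := by
      rintro (a | a) (b | b)
      · simp only [p, replicateGraph, fromRel_adj, ne_eq]
        rintro ⟨_, h1 | h1⟩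
        · exact h1
        · exact h1.symm
      · simp [p, replicateGraph, G.adj_comm v]
      · simp [p, replicateGraph, G.adj_comm v]
      · simp [p, replicateGraph]
    intro x y z hxy hyz hxz
    exact ih _ _ _ (hp _ _ hxy) (hp _ _ hyz) (hp _ _ hxz)
  | glue V V' S G G' f h hG hG' hf hh hS hS2 hfi hhi ih1 ih2 =>
    have hll : ∀ a b, (glueGraphs G G' f h).Adj (Sum.inl a) (Sum.inl b) → G.Adj a b := by
      intro a b
      simp only [glueGraphs, fromRel_adj, ne_eq]
      rintro ⟨_, h1 | h1⟩
      · exact h1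
      · exact h1.symm
    have hrr : ∀ a b, (glueGraphs G G' f h).Adj (Sum.inr a) (Sum.inr b) → G'.Adj a.1 b.1 := by
      intro a b
      simp only [glueGraphs, fromRel_adj, ne_eq]
      rintro ⟨_, h1 | h1⟩
      · exact h1
      · exact h1.symm
    have hlr : ∀ a w, (glueGraphs G G' f h).Adj (Sum.inl a) (Sum.inr w) →
        ∃ s, f s = a ∧ G'.Adj (h s) w.1 := by
      intro a w
      simp [glueGraphs]
    have two : ∀ a b w, (glueGraphs G G' f h).Adj (Sum.inl a) (Sum.inl b) →
        (glueGraphs G G' f h).Adj (Sum.inl a) (Sum.inr w) →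
        (glueGraphs G G' f h).Adj (Sum.inl b) (Sum.inr w) → False := by
      intro a b w h1 h2 h3
      obtain ⟨s, rfl, _⟩ := hlr _ _ h2
      obtain ⟨t, rfl, _⟩ := hlr _ _ h3
      exact hfi _ _ (hll _ _ h1)
    have one : ∀ a w w', (glueGraphs G G' f h).Adj (Sum.inl a) (Sum.inr w) →
        (glueGraphs G G' f h).Adj (Sum.inl a) (Sum.inr w') →
        (glueGraphs G G' f h).Adj (Sum.inr w) (Sum.inr w') → False := by
      intro a w w' h1 h2 h3
      obtain ⟨s, rfl, h4⟩ := hlr _ _ h1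
      obtain ⟨t, h5, h6⟩ := hlr _ _ h2
      rw [hf h5] at h6
      exact ih2 _ _ _ h4 (hrr _ _ h3) h6
    rintro (x | x) (y | y) (z | z) hxy hyz hxz
    · exact ih1 _ _ _ (hll _ _ hxy) (hll _ _ hyz) (hll _ _ hxz)
    · exact two _ _ _ hxy hxz hyz
    · exact two _ _ _ hxz hxy hyz.symm
    · exact one _ _ _ hxy hxz hyz
    · exact two _ _ _ hyz hxy.symm hxz.symm
    · exact one _ _ _ hxy.symm hyz hxz
    · exact one _ _ _ hxz.symm hyz.symm hxy
    · exact ih2 _ _ _ (hrr _ _ hxy) (hrr _ _ hyz) (hrr _ _ hxz)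

namespace STree

theorem onBranch_root (t : STree) (b : t.Branch) : onBranch t b (root t) := by
  cases t with
  | leaf => trivial
  | node ι c g => exact trivial

theorem treeAdj_root_left (t : STree) (u : t.NodeType) : ¬ treeAdj t (root t) u := by
  cases t with
  | leaf => exact id
  | node ι c g => exact id

theorem treeAdj_root_right (t : STree) (u : t.NodeType) : ¬ treeAdj t u (root t) := by
  cases t with
  | leaf => exact id
  | node ι c g =>
    rcases u with u | ⟨i, u⟩
    · exact id
    · exact id

theorem real_root_adj (t : STree) (x : t.NodeType ⊕ t.Branch) :
    t.realization.Adj (Sum.inl (root t)) x ↔ ∃ b, x = Sum.inr b := by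
  rcases x with u | b
  · simp [realization, treeAdj_root_left, treeAdj_root_right]
  · simp [realization, onBranch_root]

theorem real_inl_adj (t : STree) (u v : t.NodeType) :
    t.realization.Adj (Sum.inl u) (Sum.inl v) ↔ u ≠ v ∧ (treeAdj t u v ∨ treeAdj t v u) := by
  simp [realization]

theorem real_lr_adj (t : STree) (u : t.NodeType) (b : t.Branch) :
    t.realization.Adj (Sum.inl u) (Sum.inr b) ↔ onBranch t b u := by
  simp [realization]

theorem real_rr_adj (t : STree) (b b' : t.Branch) :
    ¬ t.realization.Adj (Sum.inr b) (Sum.inr b') := by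
  simp [realization]

/-- Embedding of the vertices of the realization of a subtree. -/
def sub {ι : Type} (c : ι → STree) (g : SimpleGraph ι) (i : ι) :
    (c i).NodeType ⊕ (c i).Branch → (node ι c g).NodeType ⊕ (node ι c g).Branch
  | Sum.inl u => Sum.inl (Sum.inr ⟨i, u⟩)
  | Sum.inr b => Sum.inr ⟨i, b⟩

theorem sub_inj {ι : Type} (c : ι → STree) (g : SimpleGraph ι) (i : ι) :
    Function.Injective (sub c g i) := by
  rintro (u | b) (v | b') h
  · have h1 := Sum.inr.inj (Sum.inl.inj h)
    cases h1
    rfl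
  · cases h
  · cases h
  · have h1 := Sum.inr.inj h
    cases h1
    rfl

theorem sub_index {ι : Type} (c : ι → STree) (g : SimpleGraph ι) {i j : ι} (x y)
    (h : sub c g i x = sub c g j y) : i = j := by
  rcases x with u | b <;> rcases y with v | b'
  · have h1 := Sum.inr.inj (Sum.inl.inj h)
    exact congrArg Sigma.fst h1
  · cases h
  · cases h
  · have h1 := Sum.inr.inj h
    exact congrArg Sigma.fst h1

theorem sub_ne_root {ι : Type} (c : ι → STree) (g : SimpleGraph ι) (i : ι) (x) :
    sub c g i x ≠ Sum.inl (root (node ι c g)) := by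
  rcases x with u | b <;> intro h <;> cases h

theorem vertex_cases {ι : Type} (c : ι → STree) (g : SimpleGraph ι)
    (x : (node ι c g).NodeType ⊕ (node ι c g).Branch) :
    x = Sum.inl (root (node ι c g)) ∨ ∃ i y, x = sub c g i y := by
  rcases x with (u | ⟨i, u⟩) | ⟨i, b⟩
  · exact Or.inl rfl
  · exact Or.inr ⟨i, Sum.inl u, rfl⟩
  · exact Or.inr ⟨i, Sum.inr b, rfl⟩

theorem root_adj_sub {ι : Type} (c : ι → STree) (g : SimpleGraph ι) (i : ι) (x) :
    (node ι c g).realization.Adj (Sum.inl (root (node ι c g))) (sub c g i x) ↔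
      ∃ b, x = Sum.inr b := by
  rw [real_root_adj]
  rcases x with u | b
  · constructor
    · rintro ⟨b, h⟩
      cases h
    · rintro ⟨b, h⟩
      cases h
  · exact ⟨fun _ => ⟨b, rfl⟩, fun _ => ⟨⟨i, b⟩, rfl⟩⟩

theorem treeAdj_node {ι : Type} (c : ι → STree) (g : SimpleGraph ι) (i : ι)
    (u v : (c i).NodeType) :
    treeAdj (node ι c g) (Sum.inr ⟨i, u⟩) (Sum.inr ⟨i, v⟩) ↔ treeAdj (c i) u v := by
  constructor
  · rintro (⟨_, h⟩ | ⟨h, _⟩)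
    · exact h
    · exact absurd h (g.loopless.irrefl i)
  · intro h
    exact Or.inl ⟨rfl, h⟩

theorem treeAdj_node_ne {ι : Type} (c : ι → STree) (g : SimpleGraph ι) {i j : ι} (hij : i ≠ j)
    (u : (c i).NodeType) (v : (c j).NodeType) :
    treeAdj (node ι c g) (Sum.inr ⟨i, u⟩) (Sum.inr ⟨j, v⟩) ↔
      g.Adj i j ∧ u = root (c i) ∧ v = root (c j) := by
  constructor
  · rintro (⟨h, _⟩ | h)
    · exact absurd h hij
    · exact h
  · intro h
    exact Or.inr h

theorem onBranch_node {ι : Type} (c : ι → STree) (g : SimpleGraph ι) (i : ι)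
    (u : (c i).NodeType) (b : (c i).Branch) :
    onBranch (node ι c g) ⟨i, b⟩ (Sum.inr ⟨i, u⟩) ↔ onBranch (c i) b u := by
  constructor
  · rintro ⟨_, h⟩
    exact h
  · intro h
    exact ⟨rfl, h⟩

theorem onBranch_node_ne {ι : Type} (c : ι → STree) (g : SimpleGraph ι) {i j : ι} (hij : i ≠ j)
    (u : (c i).NodeType) (b : (c j).Branch) :
    ¬ onBranch (node ι c g) ⟨j, b⟩ (Sum.inr ⟨i, u⟩) := by
  rintro ⟨h, _⟩
  exact hij h

theorem sub_adj {ι : Type} (c : ι → STree) (g : SimpleGraph ι) (i : ι) (x y) :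
    (node ι c g).realization.Adj (sub c g i x) (sub c g i y) ↔ (c i).realization.Adj x y := by
  rcases x with u | b <;> rcases y with v | b'
  · refine (real_inl_adj _ _ _).trans (Iff.trans ?_ (real_inl_adj _ _ _).symm)
    rw [treeAdj_node, treeAdj_node]
    refine and_congr_left fun _ => not_congr ⟨fun h => ?_, fun h => by rw [h]⟩
    have h1 := Sum.inr.inj h
    cases h1
    rfl
  · refine (real_lr_adj _ _ _).trans (Iff.trans ?_ (real_lr_adj _ _ _).symm)
    exact onBranch_node _ _ _ _ _
  · rw [SimpleGraph.adj_comm, SimpleGraph.adj_comm _ (Sum.inr b)]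
    refine (real_lr_adj _ _ _).trans (Iff.trans ?_ (real_lr_adj _ _ _).symm)
    exact onBranch_node _ _ _ _ _
  · exact iff_of_false (real_rr_adj _ _ _) (real_rr_adj _ _ _)

theorem sub_adj_ne {ι : Type} (c : ι → STree) (g : SimpleGraph ι) {i j : ι} (hij : i ≠ j) (x y) :
    (node ι c g).realization.Adj (sub c g i x) (sub c g j y) ↔
      g.Adj i j ∧ x = Sum.inl (root (c i)) ∧ y = Sum.inl (root (c j)) := by
  rcases x with u | b <;> rcases y with v | b'
  · refine (real_inl_adj _ _ _).trans ?_
    rw [treeAdj_node_ne _ _ hij, treeAdj_node_ne _ _ hij.symm, g.adj_comm j i]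
    constructor
    · rintro ⟨_, ⟨h1, rfl, rfl⟩ | ⟨h1, rfl, rfl⟩⟩
      · exact ⟨h1, rfl, rfl⟩
      · exact ⟨h1, rfl, rfl⟩
    · rintro ⟨h1, h2, h3⟩
      refine ⟨fun h => hij (congrArg Sigma.fst (Sum.inr.inj h)), Or.inl ⟨h1, ?_, ?_⟩⟩
      · exact Sum.inl.inj h2
      · exact Sum.inl.inj h3
  · refine (real_lr_adj _ _ _).trans (iff_of_false (onBranch_node_ne _ _ hij _ _) ?_)
    rintro ⟨_, _, h⟩
    cases h
  · rw [SimpleGraph.adj_comm]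
    refine (real_lr_adj _ _ _).trans (iff_of_false (onBranch_node_ne _ _ hij.symm _ _) ?_)
    rintro ⟨_, h, _⟩
    cases h
  · refine iff_of_false (real_rr_adj _ _ _) ?_
    rintro ⟨_, h, _⟩
    cases h

theorem inC_node {ι : Type} (c : ι → STree) (g : SimpleGraph ι) (hg : InC ι g)
    (hc : ∀ i, InC _ (c i).realization) : InC _ (node ι c g).realization := by
  classical
  have hfin : Finite ι := inC_finite hg
  have := Fintype.ofFinite ι
  set K := (node ι c g).realization with hK
  set r : (node ι c g).NodeType ⊕ (node ι c g).Branch := Sum.inl (root (node ι c g)) with hr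
  let χ : ι → (node ι c g).NodeType ⊕ (node ι c g).Branch :=
    fun i => sub c g i (Sum.inl (root (c i)))
  have hχ : Function.Injective χ := fun i j h => sub_index c g _ _ h
  have hrχ : ∀ i, ¬ K.Adj r (χ i) := by
    intro i h
    obtain ⟨b, hb⟩ := (root_adj_sub c g i _).1 h
    cases hb
  -- the realization of each subtree
  have hRi : ∀ i, InC (Set.range (sub c g i) : Set _) (K.induce (Set.range (sub c g i))) := by
    intro i
    refine InC.iso _ _ _ _ (hc i) ⟨⟨Equiv.ofInjective _ (sub_inj c g i), ?_⟩⟩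
    intro x y
    exact sub_adj c g i x y
  have hBi : ∀ i, InC (insert r (Set.range (sub c g i)) : Set _)
      (K.induce (insert r (Set.range (sub c g i)))) := by
    intro i
    refine twin_sets K _ r (χ i) (hRi i) ?_ ⟨_, rfl⟩ ?_
    · rintro ⟨x, hx⟩
      exact sub_ne_root c g i x hx
    · rintro _ ⟨x, rfl⟩
      exact (root_adj_sub c g i x).trans
        ((real_root_adj _ _).symm.trans (sub_adj c g i _ x).symm)
  let AF : Finset ι → Set ((node ι c g).NodeType ⊕ (node ι c g).Branch) :=
    fun F => ({r} ∪ Set.range χ) ∪ {z | ∃ i ∈ F, z ∈ Set.range (sub c g i)}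
  have main : ∀ F : Finset ι, InC (AF F) (K.induce (AF F)) := by
    intro F
    induction F using Finset.induction_on with
    | empty =>
      have h0 : AF ∅ = {r} ∪ Set.range χ := by
        ext z
        simp [AF]
      rw [h0]
      have hdisj : ({r} ∩ Set.range χ : Set _) = ∅ := by
        ext z
        simp only [Set.mem_inter_iff, Set.mem_singleton_iff, Set.mem_empty_iff_false, iff_false]
        rintro ⟨rfl, i, hi⟩
        exact sub_ne_root c g i _ hi
      refine glue_sets K _ _ ?_ ?_ ?_ ?_ ?_
      · exact InC.small _ _ (Set.finite_singleton r) (by simp)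
      · refine InC.iso _ _ _ _ hg ⟨⟨Equiv.ofInjective _ hχ, ?_⟩⟩
        intro i j
        change K.Adj (χ i) (χ j) ↔ g.Adj i j
        by_cases hij : i = j
        · subst hij
          exact iff_of_false (K.loopless.irrefl _) (g.loopless.irrefl _)
        · exact (sub_adj_ne c g hij _ _).trans ⟨fun h => h.1, fun h => ⟨h, rfl, rfl⟩⟩
      · rw [hdisj]
        simp
      · rw [hdisj]
        intro a ha
        exact absurd ha (Set.notMem_empty _)
      · rintro a rfl b ⟨i, rfl⟩ _ _
        exact hrχ i
    | insert i F hi ih =>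
      have h0 : AF (insert i F) = AF F ∪ insert r (Set.range (sub c g i)) := by
        ext z
        constructor
        · rintro (h | ⟨j, hj, hz⟩)
          · exact Or.inl (Or.inl h)
          · rcases Finset.mem_insert.1 hj with rfl | hj
            · exact Or.inr (Or.inr hz)
            · exact Or.inl (Or.inr ⟨j, hj, hz⟩)
        · rintro ((h | ⟨j, hj, hz⟩) | (h | hz))
          · exact Or.inl h
          · exact Or.inr ⟨j, Finset.mem_insert_of_mem hj, hz⟩
          · exact Or.inl (Or.inl h)
          · exact Or.inr ⟨i, Finset.mem_insert_self _ _, hz⟩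
      have hint : AF F ∩ insert r (Set.range (sub c g i)) ⊆ {r, χ i} := by
        rintro z ⟨((hz | ⟨j, rfl⟩) | ⟨j, hj, x, rfl⟩), (h | ⟨y, hy⟩)⟩
        · exact Or.inl h
        · exact Or.inl hz
        · exact Or.inl h
        · have := sub_index c g _ _ hy
          subst this
          exact Or.inr rfl
        · exact Or.inl h
        · have := sub_index c g _ _ hy
          subst this
          exact absurd hj hi
      rw [h0]
      refine glue_sets K _ _ ih (hBi i) ?_ ?_ ?_
      · refine (Nat.card_mono (Set.toFinite _) hint).trans ?_
        rw [Nat.card_coe_set_eq]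
        exact (Set.ncard_insert_le _ _).trans (by simp)
      · intro a ha b hb
        rcases hint ha with rfl | rfl <;> rcases hint hb with rfl | rfl
        · exact K.loopless.irrefl _
        · exact hrχ i
        · exact fun h => hrχ i h.symm
        · exact K.loopless.irrefl _
      · rintro a ha b (rfl | ⟨y, rfl⟩) haB hbA hadj
        · exact hbA (Or.inl (Or.inl rfl))
        · have hyr : y ≠ Sum.inl (root (c i)) := by
            rintro rfl
            exact hbA (Or.inl (Or.inr ⟨i, rfl⟩))
          rcases vertex_cases c g a with h | ⟨j, x, rfl⟩
          · exact haB (Or.inl h)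
          · have hji : j ≠ i := by
              rintro rfl
              exact haB (Or.inr ⟨x, rfl⟩)
            exact hyr ((sub_adj_ne c g hji _ _).1 hadj).2.2
  refine inC_of_univ K (AF Finset.univ) ?_ (main _)
  ext z
  simp only [Set.mem_univ, iff_true]
  rcases vertex_cases c g z with rfl | ⟨i, x, rfl⟩
  · exact Or.inl (Or.inl rfl)
  · exact Or.inr ⟨i, Finset.mem_univ _, x, rfl⟩

theorem inC_leaf : InC _ leaf.realization := by
  have e : leaf.NodeType ⊕ leaf.Branch ≃ Bool := Equiv.boolEquivPUnitSumPUnit.symm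
  refine InC.small _ _ (Finite.of_equiv _ e.symm) ?_
  rw [Nat.card_congr e]
  simp

end STree

theorem inC_buildTree (L : List (Σ V : Type, SimpleGraph V)) (hL : ∀ p ∈ L, InC p.1 p.2) :
    InC _ (buildTree L).realization := by
  induction L with
  | nil => exact STree.inC_leaf
  | cons p L ih =>
    obtain ⟨ι, g⟩ := p
    exact STree.inC_node _ g (hL ⟨ι, g⟩ (by simp)) fun _ => ih fun q hq => hL q (by simp [hq])

theorem inC_twincutList (m : ℕ) : ∀ p ∈ twincutList m, InC p.1 p.2 := by
  induction m with
  | zero => intro p hp; cases hp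
  | succ m ih =>
    intro p hp
    rw [twincutList, List.mem_append, List.mem_singleton] at hp
    rcases hp with hp | rfl
    · exact ih p hp
    · exact inC_buildTree _ ih

theorem inC_twincutG (k : ℕ) : InC (twincutG k).1 (twincutG k).2 := by
  match k with
  | 0 => exact InC.small PUnit ⊥ inferInstance (by simp)
  | 1 => exact InC.small PUnit ⊥ inferInstance (by simp)
  | m + 2 => exact inC_buildTree _ (inC_twincutList m)

theorem exists_rainbow {α : Type} (L : List (Σ V : Type, SimpleGraph V)) :
    ∀ (A : Finset α) (col : (buildTree L).NodeType → α),
      (∀ u v, u ≠ v → STree.treeAdj _ u v → col u ≠ col v) →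
      col (STree.root _) ∉ A →
      (∀ (j : ℕ) (hj : j < L.length), ¬ (L[j]).2.Colorable (A.card + 1 + j)) →
      ∃ (b : (buildTree L).Branch) (B : Finset α), B.card = A.card + L.length + 1 ∧
        ∀ x ∈ B, x ∈ A ∨ ∃ u, STree.onBranch _ b u ∧ col u = x := by
  classical
  induction L with
  | nil =>
    intro A col _ hroot _
    refine ⟨PUnit.unit, insert (col (STree.root _)) A, by simp [hroot], ?_⟩
    intro x hx
    rcases Finset.mem_insert.1 hx with rfl | hx
    · exact Or.inr ⟨_, trivial, rfl⟩
    · exact Or.inl hx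
  | cons p L ih =>
    obtain ⟨ι, g⟩ := p
    intro A col hcol hroot hL
    let c : ι → STree := fun _ => buildTree L
    let A' := insert (col (STree.root (STree.node ι c g))) A
    have hA' : A'.card = A.card + 1 := Finset.card_insert_of_notMem hroot
    have hex : ∃ i : ι, col (Sum.inr ⟨i, STree.root (buildTree L)⟩) ∉ A' := by
      by_contra! hall
      have h0 := hL 0 (by simp)
      refine h0 ?_
      have C : g.Coloring A' := SimpleGraph.Coloring.mk (fun i => ⟨_, hall i⟩) (by
        intro i j hij h
        refine hcol (Sum.inr ⟨i, STree.root (buildTree L)⟩)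
          (Sum.inr ⟨j, STree.root (buildTree L)⟩) ?_ ?_ (congrArg Subtype.val h)
        · intro h
          exact hij.ne (congrArg Sigma.fst (Sum.inr.inj h))
        · exact (STree.treeAdj_node_ne c g hij.ne _ _).2 ⟨hij, rfl, rfl⟩)
      have := C.colorable
      rw [Fintype.card_coe, hA'] at this
      exact this
    obtain ⟨i, hi⟩ := hex
    obtain ⟨b, B, hB, hB2⟩ := ih A' (fun u => col (Sum.inr ⟨i, u⟩)) (by
      intro u v huv hadj
      refine hcol _ _ ?_ ((STree.treeAdj_node c g i u v).2 hadj)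
      intro h
      have h1 := Sum.inr.inj h
      cases h1
      exact huv rfl) hi (by
      intro j hj
      have := hL (j + 1) (by simpa using hj)
      rw [hA', show A.card + 1 + 1 + j = A.card + 1 + (j + 1) by omega]
      exact this)
    refine ⟨⟨i, b⟩, B, ?_, ?_⟩
    · rw [hB, hA', List.length_cons]
      omega
    · intro x hx
      rcases hB2 x hx with h | ⟨u, hu, rfl⟩
      · rcases Finset.mem_insert.1 h with rfl | h
        · exact Or.inr ⟨_, STree.onBranch_root (STree.node ι c g) ⟨i, b⟩, rfl⟩
        · exact Or.inl h
      · exact Or.inr ⟨Sum.inr ⟨i, u⟩, (STree.onBranch_node c g i u b).2 hu, rfl⟩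

theorem not_colorable_buildTree (L : List (Σ V : Type, SimpleGraph V))
    (hL : ∀ (j : ℕ) (hj : j < L.length), ¬ (L[j]).2.Colorable (1 + j)) :
    ¬ (buildTree L).realization.Colorable (L.length + 1) := by
  rintro ⟨C⟩
  obtain ⟨b, B, hB, hB2⟩ := exists_rainbow L ∅ (fun u => C (Sum.inl u)) (by
    intro u v huv hadj
    exact C.valid ((STree.real_inl_adj _ _ _).2 ⟨huv, Or.inl hadj⟩)) (by simp) (by simpa using hL)
  have hBu : B = Finset.univ := by
    apply Finset.eq_univ_of_card
    simp [hB]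
  rcases hB2 (C (Sum.inr b)) (by rw [hBu]; exact Finset.mem_univ _) with h | ⟨u, hu, h⟩
  · simp at h
  · exact C.valid ((STree.real_lr_adj _ _ _).2 hu) h

theorem length_twincutList (m : ℕ) : (twincutList m).length = m := by
  induction m with
  | zero => rfl
  | succ m ih => simp [twincutList, ih]

theorem not_colorable_twincutList (m : ℕ) :
    ∀ (j : ℕ) (hj : j < (twincutList m).length), ¬ ((twincutList m)[j]).2.Colorable (1 + j) := by
  induction m with
  | zero => intro j hj; simp [twincutList] at hj
  | succ m ih =>
    intro j hj
    by_cases h : j < (twincutList m).length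
    · have he : (twincutList (m + 1))[j] = (twincutList m)[j] := List.getElem_append_left h
      rw [he]
      exact ih j h
    · have hj' : j = m := by
        rw [length_twincutList] at h hj
        omega
      subst hj'
      have he : (twincutList (j + 1))[j] = realizationSigma (buildTree (twincutList j)) := by
        refine (List.getElem_append_right (not_lt.1 h)).trans ?_
        simp
      rw [he]
      have := not_colorable_buildTree _ ih
      rw [length_twincutList, add_comm] at this
      exact this

theorem not_colorable_twincutG (m : ℕ) : ¬ (twincutG (m + 2)).2.Colorable (m + 1) := by
  have := not_colorable_buildTree _ (not_colorable_twincutList m)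
  rw [length_twincutList] at this
  exact this

end Helpers

/-- every twincut graph `G_k` belongs to `𝒞`; consequently `𝒞`
is a hereditary class of triangle-free graphs of unbounded chromatic number. -/
theorem twincut_mem_C :
    (∀ k : ℕ, 1 ≤ k → InC (twincutG k).1 (twincutG k).2) ∧
    (∀ (V : Type) (G : SimpleGraph V), InC V G → ∀ s : Set V, InC s (G.induce s)) ∧
    (∀ (V : Type) (G : SimpleGraph V), InC V G → G.CliqueFree 3) ∧
    (∀ n : ℕ, ∃ (V : Type) (G : SimpleGraph V), InC V G ∧ (n : ℕ∞) < G.chromaticNumber) := by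
  refine ⟨fun k _ => inC_twincutG k, ?_, ?_, ?_⟩
  · intro V G hG s
    exact inC_hereditary hG _ _ (SimpleGraph.Embedding.induce s)
  · intro V G hG t ht
    classical
    obtain ⟨a, b, c, hab, hac, hbc, _⟩ := SimpleGraph.is3Clique_iff.1 ht
    exact inC_triangleFree hG a b c hab hbc hac
  · intro n
    refine ⟨_, _, inC_twincutG (n + 2), ?_⟩
    rw [← not_le, SimpleGraph.chromaticNumber_le_iff_colorable]
    intro h
    exact not_colorable_twincutG n (h.mono (Nat.le_succ n))
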